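/- Let t ≥ 1 be an integer and suppose M = (M_1, …, M_n) minimizes the objective F over M[n,t]. Let u be any index attaining the minimum, over those i ∈ {1, …, n} with M_i ≥ 1, of the decrement cost p_i · ( g((M_i − 1)/(Z p_i)) − g(M_i/(Z p_i)) ). Then the tuple M⁻ defined by M⁻_i = M_i − 1 if i = u and M⁻_i = M_i otherwise minimizes F over M[n, t−1]. -/

import Mathlib

/-!
Let `W` have one unit less than `M`. Some coordinate `j` satisfies `W j < M j`, and adding a unit
there produces a competitor of `M`, so `F M ≤ F (W + e_j)`. By convexity the added unit costs at
most what removing a unit from `M j` saves, which is at most what removing one from `M u` saves.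
Hence `F (M - e_u) ≤ F W`.
-/

open fwdDiff

section Convex

variable {𝕜 : Type*} [Field 𝕜] [LinearOrder 𝕜] [IsStrictOrderedRing 𝕜] {g : 𝕜 → 𝕜}

theorem monotone_fwdDiff_natCast_of_convexOn (hg : ConvexOn 𝕜 (Set.Ici 0) g) :
    Monotone (Δ_[1] fun k : ℕ ↦ g k) := by
  refine monotone_nat_of_le_succ fun k ↦ ?_
  have slope_le := hg.slope_mono_adjacent (x := (k : 𝕜)) (y := k + 1) (z := k + 1 + 1)
    (Set.mem_Ici.2 (by positivity)) (Set.mem_Ici.2 (by positivity))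
    (lt_add_one _) (lt_add_one _)
  simpa [fwdDiff] using slope_le

theorem convexOn_Ici_const_mul_comp_div (hg : ConvexOn 𝕜 (Set.Ici 0) g) {w a : 𝕜}
    (hw : 0 ≤ w) (ha : 0 ≤ a) : ConvexOn 𝕜 (Set.Ici 0) fun x ↦ w * g (x / a) := by
  have comp_mul := (hg.comp_linearMap (LinearMap.mulRight 𝕜 a⁻¹)).subset
    (fun _ hx ↦ mul_nonneg hx (inv_nonneg.2 ha)) (convex_Ici 0)
  simp only [div_eq_mul_inv]
  exact comp_mul.smul hw

end Convex

section SeparableCost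

variable {ι R : Type*} [Fintype ι] [AddCommGroup R]

/-- The separable cost `F(M) = Σ i, f i (M i)` of distributing indivisible units over `ι`, where
`f i k` is the cost of placing `k` units at `i`. The objective `Σ i, p i * g (M i / (Z * p i))` is
the case `f i k = p i * g (k / (Z * p i))`. -/
def separableCost (f : ι → ℕ → R) (M : ι → ℕ) : R :=
  ∑ i, f i (M i)

variable [DecidableEq ι]

theorem separableCost_add_single (f : ι → ℕ → R) (M : ι → ℕ) (j : ι) :
    separableCost f (M + Pi.single j 1) = separableCost f M + Δ_[1] (f j) (M j) := by
  rw [← sub_eq_iff_eq_add', separableCost, separableCost, ← Finset.sum_sub_distrib,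
    Fintype.sum_eq_single j fun i hi ↦ by simp [hi]]
  simp [fwdDiff]

theorem separableCost_sub_single (f : ι → ℕ → R) {M : ι → ℕ} {j : ι} (hj : 1 ≤ M j) :
    separableCost f (M - Pi.single j 1) = separableCost f M + (f j (M j - 1) - f j (M j)) := by
  have single_le : Pi.single j 1 ≤ M := update_le_iff.2 ⟨hj, fun i _ ↦ Nat.zero_le (M i)⟩
  have add_single := separableCost_add_single f (M - Pi.single j 1) j
  rw [tsub_add_cancel_of_le single_le] at add_single
  simp [add_single, fwdDiff, Nat.sub_add_cancel hj, add_assoc]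

theorem decrement_min_cost_optimal_general [PartialOrder R] [IsOrderedAddMonoid R]
    {f : ι → ℕ → R} (hf : ∀ i, Monotone (Δ_[1] (f i))) {t : ℕ} {M : ι → ℕ}
    (hM : ∑ i, M i = t + 1) (hopt : IsMinOn (separableCost f) {W | ∑ i, W i = t + 1} M)
    {u : ι} (hu1 : 1 ≤ M u)
    (hu : ∀ i, 1 ≤ M i → f u (M u - 1) - f u (M u) ≤ f i (M i - 1) - f i (M i)) :
    IsMinOn (separableCost f) {W | ∑ i, W i = t} (M - Pi.single u 1) := by
  refine isMinOn_iff.2 fun W (hW : ∑ i, W i = t) ↦ ?_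
  obtain ⟨j, -, hj⟩ : ∃ j ∈ Finset.univ, W j < M j := Finset.exists_lt_of_sum_lt (by omega)
  have hMj : 1 ≤ M j := by omega
  have marginal_le : Δ_[1] (f j) (W j) ≤ f j (M j) - f j (M j - 1) := by
    simpa [fwdDiff, Nat.sub_add_cancel hMj] using hf j (Nat.le_sub_one_of_lt hj)
  have sum_add_single : ∑ i, (W + Pi.single j 1 : ι → ℕ) i = t + 1 := by
    simp [Finset.sum_add_distrib, hW]
  calc separableCost f (M - Pi.single u 1)
      = separableCost f M + (f u (M u - 1) - f u (M u)) := separableCost_sub_single f hu1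
    _ ≤ separableCost f (W + Pi.single j 1) + (f j (M j - 1) - f j (M j)) :=
        add_le_add (isMinOn_iff.1 hopt _ sum_add_single) (hu j hMj)
    _ = separableCost f W + (Δ_[1] (f j) (W j) - (f j (M j) - f j (M j - 1))) := by
        rw [separableCost_add_single]; abel
    _ ≤ separableCost f W := add_le_of_nonpos_right (sub_nonpos.2 marginal_le)

end SeparableCost

/-- If `M` minimizes `F(M) = Σ_i p_i * g(M_i / (Z p_i))` over tuples summing to
`t ≥ 1`, and `u` attains the minimal decrement cost among coordinates with
`M_i ≥ 1`, then `M - e_u` minimizes `F` over tuples summing to `t - 1`. -/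
theorem decrement_min_cost_optimal (n : ℕ) (hn : 0 < n)
    (p : Fin n → ℝ) (hp : ∀ i, 0 < p i) (hpsum : ∑ i, p i = 1)
    (Z : ℕ) (hZ : 0 < Z)
    (g : ℝ → ℝ) (hg : ConvexOn ℝ (Set.Ici 0) g) (hg1 : g 1 = 0)
    (t : ℕ) (ht : 1 ≤ t) (M : Fin n → ℕ) (hM : ∑ i, M i = t)
    (hopt : ∀ W : Fin n → ℕ, ∑ i, W i = t →
      ∑ r, p r * g ((M r : ℝ) / (Z * p r)) ≤
        ∑ r, p r * g ((W r : ℝ) / (Z * p r)))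
    (u : Fin n) (hu1 : 1 ≤ M u)
    (hu : ∀ i : Fin n, 1 ≤ M i →
      p u * (g (((M u : ℝ) - 1) / (Z * p u)) - g ((M u : ℝ) / (Z * p u))) ≤
        p i * (g (((M i : ℝ) - 1) / (Z * p i)) - g ((M i : ℝ) / (Z * p i)))) :
    ∀ W : Fin n → ℕ, ∑ i, W i = t - 1 →
      ∑ r, p r * g (((M r - (if r = u then 1 else 0) : ℕ) : ℝ) / (Z * p r)) ≤
        ∑ r, p r * g ((W r : ℝ) / (Z * p r)) := by
  obtain ⟨t, rfl⟩ := Nat.exists_eq_add_of_le' ht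
  have cost_monotone (i : Fin n) : Monotone (Δ_[1] fun k : ℕ ↦ p i * g (k / (Z * p i))) :=
    monotone_fwdDiff_natCast_of_convexOn <|
      convexOn_Ici_const_mul_comp_div hg (hp i).le (mul_nonneg Z.cast_nonneg (hp i).le)
  have optimal := decrement_min_cost_optimal_general cost_monotone hM (isMinOn_iff.2 hopt) hu1
    fun i hi ↦ by simpa only [mul_sub, Nat.cast_pred hu1, Nat.cast_pred hi] using hu i hi
  simpa only [separableCost, Pi.sub_apply, Pi.single_apply, Set.mem_ofPred_eq,
    add_tsub_cancel_right] using isMinOn_iff.1 optimal
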